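/- arXiv:1511.03993 — 3 statements merged into one kernel-verified Lean document; each statement's English description precedes it below -/
import Mathlib

section
/- There exist real numbers u0, u1, x1, x2 with 1.08 < u0 < 1.09, 0.69 < u1 < 0.70, 0.93 < x1 < 0.94 and 1.02 < x2 < 1.03 such that f1 = f2 = f3 = f4 = 0. (This solution gives the first known non-naturally reductive left-invariant Einstein metric on the compact Lie group G2; note that on such a solution u0 ≠ x2, x1 ≠ 1 and x1 ≠ x2, so none of the naturally reductive conditions holds.) -/
noncomputable def f1 (u0 u1 x1 x2 : ℝ) : ℝ :=
  9*u0*u1*x1 ^ 2*x2 ^ 2 + 2*u0*u1*x1 ^ 2 + u0*u1*x2 ^ 2 - 3*u1 ^ 2*x1 ^ 2*x2 ^ 2 - 3*u1 ^ 2*x2 ^ 2 - 6*x1 ^ 2*x2 ^ 2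

noncomputable def f2 (u0 u1 x1 x2 : ℝ) : ℝ :=
  u0*u1*x2 + 6*u1 ^ 2*x1 ^ 2*x2 + 15*u1 ^ 2*x2 - 6*u1*x1 ^ 3 + 6*u1*x1*x2 ^ 2 - 48*u1*x1*x2 + 6*u1*x1 + 8*u1*x2 ^ 2 + 12*x1 ^ 2*x2

noncomputable def f3 (u0 u1 x1 x2 : ℝ) : ℝ :=
  4*u0*x1 ^ 2 - u0*x2 ^ 2 - 9*u1*x2 ^ 2 + 18*x1 ^ 3*x2 - 32*x1 ^ 2*x2 - 18*x1*x2 ^ 3 + 48*x1*x2 ^ 2 + 6*x1*x2 - 16*x2 ^ 3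

noncomputable def f4 (u0 u1 x1 x2 : ℝ) : ℝ :=
  9*u0*x1 ^ 2*x2 ^ 2 - 4*u0*x1 ^ 2 + 9*u1*x1 ^ 2*x2 ^ 2 - 6*x1 ^ 3*x2 - 48*x1 ^ 2*x2 ^ 2 + 32*x1 ^ 2*x2 + 18*x1*x2 ^ 3 - 18*x1*x2 + 8*x2 ^ 3

theorem four_bound (e0 e1 e2 e3 v0 v1 v2 v3 M : ℝ) (m0 : |v0| ≤ M) (m1 : |v1| ≤ M)
    (m2 : |v2| ≤ M) (m3 : |v3| ≤ M) (h0 : |e0| ≤ 1/8) (h1 : |e1| ≤ 1/8) (h2 : |e2| ≤ 1/8)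
    (h3 : |e3| ≤ 1/8) : |e0*v0 + e1*v1 + e2*v2 + e3*v3| ≤ M/2 := by
  have key : ∀ e v : ℝ, |v| ≤ M → |e| ≤ 1/8 → |e*v| ≤ 1/8*M := by
    intro e v hv he
    rw [abs_mul]
    exact mul_le_mul he hv (abs_nonneg _) (by norm_num)
  have k0 := abs_le.1 (key e0 v0 m0 h0)
  have k1 := abs_le.1 (key e1 v1 m1 h1)
  have k2 := abs_le.1 (key e2 v2 m2 h2)
  have k3 := abs_le.1 (key e3 v3 m3 h3)
  rw [abs_le]
  constructor <;> linarith [k0.1, k0.2, k1.1, k1.2, k2.1, k2.2, k3.1, k3.2]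

set_option maxHeartbeats 2000000 in
theorem diff1 (a b c d p q r s : ℝ) (ha1 : 1.085096 ≤ a) (ha2 : a ≤ 1.085296) (hb1 : 0.699195 ≤ b) (hb2 : b ≤ 0.699395) (hc1 : 0.932360 ≤ c) (hc2 : c ≤ 0.932560) (hd1 : 1.022407 ≤ d) (hd2 : d ≤ 1.022607)
    (hp1 : 1.085096 ≤ p) (hp2 : p ≤ 1.085296) (hq1 : 0.699195 ≤ q) (hq2 : q ≤ 0.699395) (hr1 : 0.932360 ≤ r) (hr2 : r ≤ 0.932560) (hs1 : 1.022407 ≤ s) (hs2 : s ≤ 1.022607) :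
    ∃ g0 g1 g2 g3 : ℝ, f1 a b c d - f1 p q r s = g0*(a-p) + g1*(b-q) + g2*(c-r) + g3*(d-s) ∧
      7.664 ≤ g0 ∧ g0 ≤ 7.673 ∧
      3.690 ≤ g1 ∧ g1 ≤ 3.709 ∧
      1.574 ≤ g2 ∧ g2 ≤ 1.602 ∧
      (-2.595) ≤ g3 ∧ g3 ≤ (-2.567) := by
  have ha0 : 0 ≤ a := by linarith
  have hb0 : 0 ≤ b := by linarith
  have hc0 : 0 ≤ c := by linarith
  have hd0 : 0 ≤ d := by linarith
  have hp0 : 0 ≤ p := by linarith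
  have hq0 : 0 ≤ q := by linarith
  have hr0 : 0 ≤ r := by linarith
  have hs0 : 0 ≤ s := by linarith
  refine ⟨9*b*c ^ 2*d ^ 2 + 2*b*c ^ 2 + 1*b*d ^ 2,
    9*p*c ^ 2*d ^ 2 + 2*p*c ^ 2 + 1*p*d ^ 2 - (3*b*c ^ 2*d ^ 2 + 3*q*c ^ 2*d ^ 2 + 3*b*d ^ 2 + 3*q*d ^ 2),
    9*p*q*c*d ^ 2 + 9*p*q*r*d ^ 2 + 2*p*q*c + 2*p*q*r - (3*q ^ 2*c*d ^ 2 + 3*q ^ 2*r*d ^ 2 + 6*c*d ^ 2 + 6*r*d ^ 2),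
    9*p*q*r ^ 2*d + 9*p*q*r ^ 2*s + 1*p*q*d + 1*p*q*s - (3*q ^ 2*r ^ 2*d + 3*q ^ 2*r ^ 2*s + 3*q ^ 2*d + 3*q ^ 2*s + 6*r ^ 2*d + 6*r ^ 2*s),
    by unfold f1; ring, ?_, ?_, ?_, ?_, ?_, ?_, ?_, ?_⟩
  · refine le_trans (b := 9*0.699195*0.932360 ^ 2*1.022407 ^ 2 + 2*0.699195*0.932360 ^ 2 + 1*0.699195*1.022407 ^ 2) (by norm_num) ?_
    gcongr
  · refine le_trans (b := 9*0.699395*0.932560 ^ 2*1.022607 ^ 2 + 2*0.699395*0.932560 ^ 2 + 1*0.699395*1.022607 ^ 2) ?_ (by norm_num)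
    gcongr
  · refine le_trans (b := 9*1.085096*0.932360 ^ 2*1.022407 ^ 2 + 2*1.085096*0.932360 ^ 2 + 1*1.085096*1.022407 ^ 2 - (3*0.699395*0.932560 ^ 2*1.022607 ^ 2 + 3*0.699395*0.932560 ^ 2*1.022607 ^ 2 + 3*0.699395*1.022607 ^ 2 + 3*0.699395*1.022607 ^ 2)) (by norm_num) ?_
    gcongr
  · refine le_trans (b := 9*1.085296*0.932560 ^ 2*1.022607 ^ 2 + 2*1.085296*0.932560 ^ 2 + 1*1.085296*1.022607 ^ 2 - (3*0.699195*0.932360 ^ 2*1.022407 ^ 2 + 3*0.699195*0.932360 ^ 2*1.022407 ^ 2 + 3*0.699195*1.022407 ^ 2 + 3*0.699195*1.022407 ^ 2)) ?_ (by norm_num)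
    gcongr
  · refine le_trans (b := 9*1.085096*0.699195*0.932360*1.022407 ^ 2 + 9*1.085096*0.699195*0.932360*1.022407 ^ 2 + 2*1.085096*0.699195*0.932360 + 2*1.085096*0.699195*0.932360 - (3*0.699395 ^ 2*0.932560*1.022607 ^ 2 + 3*0.699395 ^ 2*0.932560*1.022607 ^ 2 + 6*0.932560*1.022607 ^ 2 + 6*0.932560*1.022607 ^ 2)) (by norm_num) ?_
    gcongr
  · refine le_trans (b := 9*1.085296*0.699395*0.932560*1.022607 ^ 2 + 9*1.085296*0.699395*0.932560*1.022607 ^ 2 + 2*1.085296*0.699395*0.932560 + 2*1.085296*0.699395*0.932560 - (3*0.699195 ^ 2*0.932360*1.022407 ^ 2 + 3*0.699195 ^ 2*0.932360*1.022407 ^ 2 + 6*0.932360*1.022407 ^ 2 + 6*0.932360*1.022407 ^ 2)) ?_ (by norm_num)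
    gcongr
  · refine le_trans (b := 9*1.085096*0.699195*0.932360 ^ 2*1.022407 + 9*1.085096*0.699195*0.932360 ^ 2*1.022407 + 1*1.085096*0.699195*1.022407 + 1*1.085096*0.699195*1.022407 - (3*0.699395 ^ 2*0.932560 ^ 2*1.022607 + 3*0.699395 ^ 2*0.932560 ^ 2*1.022607 + 3*0.699395 ^ 2*1.022607 + 3*0.699395 ^ 2*1.022607 + 6*0.932560 ^ 2*1.022607 + 6*0.932560 ^ 2*1.022607)) (by norm_num) ?_
    gcongr
  · refine le_trans (b := 9*1.085296*0.699395*0.932560 ^ 2*1.022607 + 9*1.085296*0.699395*0.932560 ^ 2*1.022607 + 1*1.085296*0.699395*1.022607 + 1*1.085296*0.699395*1.022607 - (3*0.699195 ^ 2*0.932360 ^ 2*1.022407 + 3*0.699195 ^ 2*0.932360 ^ 2*1.022407 + 3*0.699195 ^ 2*1.022407 + 3*0.699195 ^ 2*1.022407 + 6*0.932360 ^ 2*1.022407 + 6*0.932360 ^ 2*1.022407)) ?_ (by norm_num)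
    gcongr

set_option maxHeartbeats 2000000 in
theorem diff2 (a b c d p q r s : ℝ) (ha1 : 1.085096 ≤ a) (ha2 : a ≤ 1.085296) (hb1 : 0.699195 ≤ b) (hb2 : b ≤ 0.699395) (hc1 : 0.932360 ≤ c) (hc2 : c ≤ 0.932560) (hd1 : 1.022407 ≤ d) (hd2 : d ≤ 1.022607)
    (hp1 : 1.085096 ≤ p) (hp2 : p ≤ 1.085296) (hq1 : 0.699195 ≤ q) (hq2 : q ≤ 0.699395) (hr1 : 0.932360 ≤ r) (hr2 : r ≤ 0.932560) (hs1 : 1.022407 ≤ s) (hs2 : s ≤ 1.022607) :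
    ∃ g0 g1 g2 g3 : ℝ, f2 a b c d - f2 p q r s = g0*(a-p) + g1*(b-q) + g2*(c-r) + g3*(d-s) ∧
      0.714 ≤ g0 ∧ g0 ≤ 0.716 ∧
      (-0.825) ≤ g1 ∧ g1 ≤ (-0.776) ∧
      (-8.228) ≤ g2 ∧ g2 ≤ (-8.184) ∧
      9.202 ≤ g3 ∧ g3 ≤ 9.241 := by
  have ha0 : 0 ≤ a := by linarith
  have hb0 : 0 ≤ b := by linarith
  have hc0 : 0 ≤ c := by linarith
  have hd0 : 0 ≤ d := by linarith
  have hp0 : 0 ≤ p := by linarith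
  have hq0 : 0 ≤ q := by linarith
  have hr0 : 0 ≤ r := by linarith
  have hs0 : 0 ≤ s := by linarith
  refine ⟨1*b*d,
    1*p*d + 6*b*c ^ 2*d + 6*q*c ^ 2*d + 15*b*d + 15*q*d + 6*c*d ^ 2 + 6*c + 8*d ^ 2 - (6*c ^ 3 + 48*c*d),
    6*q ^ 2*c*d + 6*q ^ 2*r*d + 6*q*d ^ 2 + 6*q + 12*c*d + 12*r*d - (6*q*c ^ 2 + 6*q*c*r + 6*q*r ^ 2 + 48*q*d),
    1*p*q + 6*q ^ 2*r ^ 2 + 15*q ^ 2 + 6*q*r*d + 6*q*r*s + 8*q*d + 8*q*s + 12*r ^ 2 - (48*q*r),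
    by unfold f2; ring, ?_, ?_, ?_, ?_, ?_, ?_, ?_, ?_⟩
  · refine le_trans (b := 1*0.699195*1.022407) (by norm_num) ?_
    gcongr
  · refine le_trans (b := 1*0.699395*1.022607) ?_ (by norm_num)
    gcongr
  · refine le_trans (b := 1*1.085096*1.022407 + 6*0.699195*0.932360 ^ 2*1.022407 + 6*0.699195*0.932360 ^ 2*1.022407 + 15*0.699195*1.022407 + 15*0.699195*1.022407 + 6*0.932360*1.022407 ^ 2 + 6*0.932360 + 8*1.022407 ^ 2 - (6*0.932560 ^ 3 + 48*0.932560*1.022607)) (by norm_num) ?_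
    gcongr
  · refine le_trans (b := 1*1.085296*1.022607 + 6*0.699395*0.932560 ^ 2*1.022607 + 6*0.699395*0.932560 ^ 2*1.022607 + 15*0.699395*1.022607 + 15*0.699395*1.022607 + 6*0.932560*1.022607 ^ 2 + 6*0.932560 + 8*1.022607 ^ 2 - (6*0.932360 ^ 3 + 48*0.932360*1.022407)) ?_ (by norm_num)
    gcongr
  · refine le_trans (b := 6*0.699195 ^ 2*0.932360*1.022407 + 6*0.699195 ^ 2*0.932360*1.022407 + 6*0.699195*1.022407 ^ 2 + 6*0.699195 + 12*0.932360*1.022407 + 12*0.932360*1.022407 - (6*0.699395*0.932560 ^ 2 + 6*0.699395*0.932560*0.932560 + 6*0.699395*0.932560 ^ 2 + 48*0.699395*1.022607)) (by norm_num) ?_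
    gcongr
  · refine le_trans (b := 6*0.699395 ^ 2*0.932560*1.022607 + 6*0.699395 ^ 2*0.932560*1.022607 + 6*0.699395*1.022607 ^ 2 + 6*0.699395 + 12*0.932560*1.022607 + 12*0.932560*1.022607 - (6*0.699195*0.932360 ^ 2 + 6*0.699195*0.932360*0.932360 + 6*0.699195*0.932360 ^ 2 + 48*0.699195*1.022407)) ?_ (by norm_num)
    gcongr
  · refine le_trans (b := 1*1.085096*0.699195 + 6*0.699195 ^ 2*0.932360 ^ 2 + 15*0.699195 ^ 2 + 6*0.699195*0.932360*1.022407 + 6*0.699195*0.932360*1.022407 + 8*0.699195*1.022407 + 8*0.699195*1.022407 + 12*0.932360 ^ 2 - (48*0.699395*0.932560)) (by norm_num) ?_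
    gcongr
  · refine le_trans (b := 1*1.085296*0.699395 + 6*0.699395 ^ 2*0.932560 ^ 2 + 15*0.699395 ^ 2 + 6*0.699395*0.932560*1.022607 + 6*0.699395*0.932560*1.022607 + 8*0.699395*1.022607 + 8*0.699395*1.022607 + 12*0.932560 ^ 2 - (48*0.699195*0.932360)) ?_ (by norm_num)
    gcongr

set_option maxHeartbeats 2000000 in
theorem diff3 (a b c d p q r s : ℝ) (ha1 : 1.085096 ≤ a) (ha2 : a ≤ 1.085296) (hb1 : 0.699195 ≤ b) (hb2 : b ≤ 0.699395) (hc1 : 0.932360 ≤ c) (hc2 : c ≤ 0.932560) (hd1 : 1.022407 ≤ d) (hd2 : d ≤ 1.022607)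
    (hp1 : 1.085096 ≤ p) (hp2 : p ≤ 1.085296) (hq1 : 0.699195 ≤ q) (hq2 : q ≤ 0.699395) (hr1 : 0.932360 ≤ r) (hr2 : r ≤ 0.932560) (hs1 : 1.022407 ≤ s) (hs2 : s ≤ 1.022607) :
    ∃ g0 g1 g2 g3 : ℝ, f3 a b c d - f3 p q r s = g0*(a-p) + g1*(b-q) + g2*(c-r) + g3*(d-s) ∧
      2.431 ≤ g0 ∧ g0 ≤ 2.434 ∧
      (-9.412) ≤ g1 ∧ g1 ≤ (-9.407) ∧
      32.115 ≤ g2 ∧ g2 ≤ 32.206 ∧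
      (-34.084) ≤ g3 ∧ g3 ≤ (-33.964) := by
  have ha0 : 0 ≤ a := by linarith
  have hb0 : 0 ≤ b := by linarith
  have hc0 : 0 ≤ c := by linarith
  have hd0 : 0 ≤ d := by linarith
  have hp0 : 0 ≤ p := by linarith
  have hq0 : 0 ≤ q := by linarith
  have hr0 : 0 ≤ r := by linarith
  have hs0 : 0 ≤ s := by linarith
  refine ⟨4*c ^ 2 - (1*d ^ 2),
    0 - (9*d ^ 2),
    4*p*c + 4*p*r + 18*c ^ 2*d + 18*c*r*d + 18*r ^ 2*d + 48*d ^ 2 + 6*d - (32*c*d + 32*r*d + 18*d ^ 3),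
    18*r ^ 3 + 48*r*d + 48*r*s + 6*r - (1*p*d + 1*p*s + 9*q*d + 9*q*s + 32*r ^ 2 + 18*r*d ^ 2 + 18*r*d*s + 18*r*s ^ 2 + 16*d ^ 2 + 16*d*s + 16*s ^ 2),
    by unfold f3; ring, ?_, ?_, ?_, ?_, ?_, ?_, ?_, ?_⟩
  · refine le_trans (b := 4*0.932360 ^ 2 - (1*1.022607 ^ 2)) (by norm_num) ?_
    gcongr
  · refine le_trans (b := 4*0.932560 ^ 2 - (1*1.022407 ^ 2)) ?_ (by norm_num)
    gcongr
  · refine le_trans (b := 0 - (9*1.022607 ^ 2)) (by norm_num) ?_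
    gcongr
  · refine le_trans (b := 0 - (9*1.022407 ^ 2)) ?_ (by norm_num)
    gcongr
  · refine le_trans (b := 4*1.085096*0.932360 + 4*1.085096*0.932360 + 18*0.932360 ^ 2*1.022407 + 18*0.932360*0.932360*1.022407 + 18*0.932360 ^ 2*1.022407 + 48*1.022407 ^ 2 + 6*1.022407 - (32*0.932560*1.022607 + 32*0.932560*1.022607 + 18*1.022607 ^ 3)) (by norm_num) ?_
    gcongr
  · refine le_trans (b := 4*1.085296*0.932560 + 4*1.085296*0.932560 + 18*0.932560 ^ 2*1.022607 + 18*0.932560*0.932560*1.022607 + 18*0.932560 ^ 2*1.022607 + 48*1.022607 ^ 2 + 6*1.022607 - (32*0.932360*1.022407 + 32*0.932360*1.022407 + 18*1.022407 ^ 3)) ?_ (by norm_num)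
    gcongr
  · refine le_trans (b := 18*0.932360 ^ 3 + 48*0.932360*1.022407 + 48*0.932360*1.022407 + 6*0.932360 - (1*1.085296*1.022607 + 1*1.085296*1.022607 + 9*0.699395*1.022607 + 9*0.699395*1.022607 + 32*0.932560 ^ 2 + 18*0.932560*1.022607 ^ 2 + 18*0.932560*1.022607*1.022607 + 18*0.932560*1.022607 ^ 2 + 16*1.022607 ^ 2 + 16*1.022607*1.022607 + 16*1.022607 ^ 2)) (by norm_num) ?_
    gcongr
  · refine le_trans (b := 18*0.932560 ^ 3 + 48*0.932560*1.022607 + 48*0.932560*1.022607 + 6*0.932560 - (1*1.085096*1.022407 + 1*1.085096*1.022407 + 9*0.699195*1.022407 + 9*0.699195*1.022407 + 32*0.932360 ^ 2 + 18*0.932360*1.022407 ^ 2 + 18*0.932360*1.022407*1.022407 + 18*0.932360*1.022407 ^ 2 + 16*1.022407 ^ 2 + 16*1.022407*1.022407 + 16*1.022407 ^ 2)) ?_ (by norm_num)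
    gcongr

set_option maxHeartbeats 2000000 in
theorem diff4 (a b c d p q r s : ℝ) (ha1 : 1.085096 ≤ a) (ha2 : a ≤ 1.085296) (hb1 : 0.699195 ≤ b) (hb2 : b ≤ 0.699395) (hc1 : 0.932360 ≤ c) (hc2 : c ≤ 0.932560) (hd1 : 1.022407 ≤ d) (hd2 : d ≤ 1.022607)
    (hp1 : 1.085096 ≤ p) (hp2 : p ≤ 1.085296) (hq1 : 0.699195 ≤ q) (hq2 : q ≤ 0.699395) (hr1 : 0.932360 ≤ r) (hr2 : r ≤ 0.932560) (hs1 : 1.022407 ≤ s) (hs2 : s ≤ 1.022607) :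
    ∃ g0 g1 g2 g3 : ℝ, f4 a b c d - f4 p q r s = g0*(a-p) + g1*(b-q) + g2*(c-r) + g3*(d-s) ∧
      4.699 ≤ g0 ∧ g0 ≤ 4.708 ∧
      8.178 ≤ g1 ∧ g1 ≤ 8.185 ∧
      (-24.584) ≤ g2 ∧ g2 ≤ (-24.448) ∧
      27.051 ≤ g3 ∧ g3 ≤ 27.190 := by
  have ha0 : 0 ≤ a := by linarith
  have hb0 : 0 ≤ b := by linarith
  have hc0 : 0 ≤ c := by linarith
  have hd0 : 0 ≤ d := by linarith
  have hp0 : 0 ≤ p := by linarith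
  have hq0 : 0 ≤ q := by linarith
  have hr0 : 0 ≤ r := by linarith
  have hs0 : 0 ≤ s := by linarith
  refine ⟨9*c ^ 2*d ^ 2 - (4*c ^ 2),
    9*c ^ 2*d ^ 2,
    9*p*c*d ^ 2 + 9*p*r*d ^ 2 + 9*q*c*d ^ 2 + 9*q*r*d ^ 2 + 32*c*d + 32*r*d + 18*d ^ 3 - (4*p*c + 4*p*r + 6*c ^ 2*d + 6*c*r*d + 6*r ^ 2*d + 48*c*d ^ 2 + 48*r*d ^ 2 + 18*d),
    9*p*r ^ 2*d + 9*p*r ^ 2*s + 9*q*r ^ 2*d + 9*q*r ^ 2*s + 32*r ^ 2 + 18*r*d ^ 2 + 18*r*d*s + 18*r*s ^ 2 + 8*d ^ 2 + 8*d*s + 8*s ^ 2 - (6*r ^ 3 + 48*r ^ 2*d + 48*r ^ 2*s + 18*r),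
    by unfold f4; ring, ?_, ?_, ?_, ?_, ?_, ?_, ?_, ?_⟩
  · refine le_trans (b := 9*0.932360 ^ 2*1.022407 ^ 2 - (4*0.932560 ^ 2)) (by norm_num) ?_
    gcongr
  · refine le_trans (b := 9*0.932560 ^ 2*1.022607 ^ 2 - (4*0.932360 ^ 2)) ?_ (by norm_num)
    gcongr
  · refine le_trans (b := 9*0.932360 ^ 2*1.022407 ^ 2) (by norm_num) ?_
    gcongr
  · refine le_trans (b := 9*0.932560 ^ 2*1.022607 ^ 2) ?_ (by norm_num)
    gcongr
  · refine le_trans (b := 9*1.085096*0.932360*1.022407 ^ 2 + 9*1.085096*0.932360*1.022407 ^ 2 + 9*0.699195*0.932360*1.022407 ^ 2 + 9*0.699195*0.932360*1.022407 ^ 2 + 32*0.932360*1.022407 + 32*0.932360*1.022407 + 18*1.022407 ^ 3 - (4*1.085296*0.932560 + 4*1.085296*0.932560 + 6*0.932560 ^ 2*1.022607 + 6*0.932560*0.932560*1.022607 + 6*0.932560 ^ 2*1.022607 + 48*0.932560*1.022607 ^ 2 + 48*0.932560*1.022607 ^ 2 + 18*1.022607)) (by norm_num) ?_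
    gcongr
  · refine le_trans (b := 9*1.085296*0.932560*1.022607 ^ 2 + 9*1.085296*0.932560*1.022607 ^ 2 + 9*0.699395*0.932560*1.022607 ^ 2 + 9*0.699395*0.932560*1.022607 ^ 2 + 32*0.932560*1.022607 + 32*0.932560*1.022607 + 18*1.022607 ^ 3 - (4*1.085096*0.932360 + 4*1.085096*0.932360 + 6*0.932360 ^ 2*1.022407 + 6*0.932360*0.932360*1.022407 + 6*0.932360 ^ 2*1.022407 + 48*0.932360*1.022407 ^ 2 + 48*0.932360*1.022407 ^ 2 + 18*1.022407)) ?_ (by norm_num)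
    gcongr
  · refine le_trans (b := 9*1.085096*0.932360 ^ 2*1.022407 + 9*1.085096*0.932360 ^ 2*1.022407 + 9*0.699195*0.932360 ^ 2*1.022407 + 9*0.699195*0.932360 ^ 2*1.022407 + 32*0.932360 ^ 2 + 18*0.932360*1.022407 ^ 2 + 18*0.932360*1.022407*1.022407 + 18*0.932360*1.022407 ^ 2 + 8*1.022407 ^ 2 + 8*1.022407*1.022407 + 8*1.022407 ^ 2 - (6*0.932560 ^ 3 + 48*0.932560 ^ 2*1.022607 + 48*0.932560 ^ 2*1.022607 + 18*0.932560)) (by norm_num) ?_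
    gcongr
  · refine le_trans (b := 9*1.085296*0.932560 ^ 2*1.022607 + 9*1.085296*0.932560 ^ 2*1.022607 + 9*0.699395*0.932560 ^ 2*1.022607 + 9*0.699395*0.932560 ^ 2*1.022607 + 32*0.932560 ^ 2 + 18*0.932560*1.022607 ^ 2 + 18*0.932560*1.022607*1.022607 + 18*0.932560*1.022607 ^ 2 + 8*1.022607 ^ 2 + 8*1.022607*1.022607 + 8*1.022607 ^ 2 - (6*0.932360 ^ 3 + 48*0.932360 ^ 2*1.022407 + 48*0.932360 ^ 2*1.022407 + 18*0.932360)) ?_ (by norm_num)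
    gcongr

noncomputable def T0 (a b c d : ℝ) : ℝ :=
  a - (0.097*f1 a b c d + 0.131*f2 a b c d + 0.039*f3 a b c d + 0.014*f4 a b c d)

noncomputable def T1 (a b c d : ℝ) : ℝ :=
  b - ((-0.044)*f1 a b c d + (-0.332)*f2 a b c d + 0.007*f3 a b c d + 0.118*f4 a b c d)

noncomputable def T2 (a b c d : ℝ) : ℝ :=
  c - ((-0.549)*f1 a b c d + (-0.573)*f2 a b c d + 0.474*f3 a b c d + 0.737*f4 a b c d)

noncomputable def T3 (a b c d : ℝ) : ℝ :=
  d - ((-0.500)*f1 a b c d + (-0.441)*f2 a b c d + 0.419*f3 a b c d + 0.665*f4 a b c d)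

set_option maxHeartbeats 2000000 in
theorem contr (a b c d p q r s M : ℝ) (ha1 : 1.085096 ≤ a) (ha2 : a ≤ 1.085296) (hb1 : 0.699195 ≤ b) (hb2 : b ≤ 0.699395) (hc1 : 0.932360 ≤ c) (hc2 : c ≤ 0.932560) (hd1 : 1.022407 ≤ d) (hd2 : d ≤ 1.022607)
    (hp1 : 1.085096 ≤ p) (hp2 : p ≤ 1.085296) (hq1 : 0.699195 ≤ q) (hq2 : q ≤ 0.699395) (hr1 : 0.932360 ≤ r) (hr2 : r ≤ 0.932560) (hs1 : 1.022407 ≤ s) (hs2 : s ≤ 1.022607)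
    (m0 : |a-p| ≤ M) (m1 : |b-q| ≤ M) (m2 : |c-r| ≤ M) (m3 : |d-s| ≤ M) :
    |T0 a b c d - T0 p q r s| ≤ M/2 ∧ |T1 a b c d - T1 p q r s| ≤ M/2 ∧ |T2 a b c d - T2 p q r s| ≤ M/2 ∧ |T3 a b c d - T3 p q r s| ≤ M/2 := by
  obtain ⟨g00, g01, g02, g03, e0, l00, k00, l01, k01, l02, k02, l03, k03⟩ := diff1 a b c d p q r s ha1 ha2 hb1 hb2 hc1 hc2 hd1 hd2 hp1 hp2 hq1 hq2 hr1 hr2 hs1 hs2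
  obtain ⟨g10, g11, g12, g13, e1, l10, k10, l11, k11, l12, k12, l13, k13⟩ := diff2 a b c d p q r s ha1 ha2 hb1 hb2 hc1 hc2 hd1 hd2 hp1 hp2 hq1 hq2 hr1 hr2 hs1 hs2
  obtain ⟨g20, g21, g22, g23, e2, l20, k20, l21, k21, l22, k22, l23, k23⟩ := diff3 a b c d p q r s ha1 ha2 hb1 hb2 hc1 hc2 hd1 hd2 hp1 hp2 hq1 hq2 hr1 hr2 hs1 hs2
  obtain ⟨g30, g31, g32, g33, e3, l30, k30, l31, k31, l32, k32, l33, k33⟩ := diff4 a b c d p q r s ha1 ha2 hb1 hb2 hc1 hc2 hd1 hd2 hp1 hp2 hq1 hq2 hr1 hr2 hs1 hs2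
  have t0 : T0 a b c d - T0 p q r s = (1 - (0.097*g00 + 0.131*g10 + 0.039*g20 + 0.014*g30))*(a-p) + (0 - (0.097*g01 + 0.131*g11 + 0.039*g21 + 0.014*g31))*(b-q) + (0 - (0.097*g02 + 0.131*g12 + 0.039*g22 + 0.014*g32))*(c-r) + (0 - (0.097*g03 + 0.131*g13 + 0.039*g23 + 0.014*g33))*(d-s) := by
    unfold T0
    linear_combination -0.097*e0 - 0.131*e1 - 0.039*e2 - 0.014*e3
  have t1 : T1 a b c d - T1 p q r s = (0 - ((-0.044)*g00 + (-0.332)*g10 + 0.007*g20 + 0.118*g30))*(a-p) + (1 - ((-0.044)*g01 + (-0.332)*g11 + 0.007*g21 + 0.118*g31))*(b-q) + (0 - ((-0.044)*g02 + (-0.332)*g12 + 0.007*g22 + 0.118*g32))*(c-r) + (0 - ((-0.044)*g03 + (-0.332)*g13 + 0.007*g23 + 0.118*g33))*(d-s) := by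
    unfold T1
    linear_combination -(-0.044)*e0 - (-0.332)*e1 - 0.007*e2 - 0.118*e3
  have t2 : T2 a b c d - T2 p q r s = (0 - ((-0.549)*g00 + (-0.573)*g10 + 0.474*g20 + 0.737*g30))*(a-p) + (0 - ((-0.549)*g01 + (-0.573)*g11 + 0.474*g21 + 0.737*g31))*(b-q) + (1 - ((-0.549)*g02 + (-0.573)*g12 + 0.474*g22 + 0.737*g32))*(c-r) + (0 - ((-0.549)*g03 + (-0.573)*g13 + 0.474*g23 + 0.737*g33))*(d-s) := by
    unfold T2
    linear_combination -(-0.549)*e0 - (-0.573)*e1 - 0.474*e2 - 0.737*e3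
  have t3 : T3 a b c d - T3 p q r s = (0 - ((-0.500)*g00 + (-0.441)*g10 + 0.419*g20 + 0.665*g30))*(a-p) + (0 - ((-0.500)*g01 + (-0.441)*g11 + 0.419*g21 + 0.665*g31))*(b-q) + (0 - ((-0.500)*g02 + (-0.441)*g12 + 0.419*g22 + 0.665*g32))*(c-r) + (1 - ((-0.500)*g03 + (-0.441)*g13 + 0.419*g23 + 0.665*g33))*(d-s) := by
    unfold T3
    linear_combination -(-0.500)*e0 - (-0.441)*e1 - 0.419*e2 - 0.665*e3
  refine ⟨?_, ?_, ?_, ?_⟩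
  · rw [t0]
    refine four_bound _ _ _ _ _ _ _ _ M m0 m1 m2 m3 ?_ ?_ ?_ ?_
    · rw [abs_le]; constructor <;> linarith only [l00, k00, l10, k10, l20, k20, l30, k30]
    · rw [abs_le]; constructor <;> linarith only [l01, k01, l11, k11, l21, k21, l31, k31]
    · rw [abs_le]; constructor <;> linarith only [l02, k02, l12, k12, l22, k22, l32, k32]
    · rw [abs_le]; constructor <;> linarith only [l03, k03, l13, k13, l23, k23, l33, k33]
  · rw [t1]
    refine four_bound _ _ _ _ _ _ _ _ M m0 m1 m2 m3 ?_ ?_ ?_ ?_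
    · rw [abs_le]; constructor <;> linarith only [l00, k00, l10, k10, l20, k20, l30, k30]
    · rw [abs_le]; constructor <;> linarith only [l01, k01, l11, k11, l21, k21, l31, k31]
    · rw [abs_le]; constructor <;> linarith only [l02, k02, l12, k12, l22, k22, l32, k32]
    · rw [abs_le]; constructor <;> linarith only [l03, k03, l13, k13, l23, k23, l33, k33]
  · rw [t2]
    refine four_bound _ _ _ _ _ _ _ _ M m0 m1 m2 m3 ?_ ?_ ?_ ?_
    · rw [abs_le]; constructor <;> linarith only [l00, k00, l10, k10, l20, k20, l30, k30]
    · rw [abs_le]; constructor <;> linarith only [l01, k01, l11, k11, l21, k21, l31, k31]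
    · rw [abs_le]; constructor <;> linarith only [l02, k02, l12, k12, l22, k22, l32, k32]
    · rw [abs_le]; constructor <;> linarith only [l03, k03, l13, k13, l23, k23, l33, k33]
  · rw [t3]
    refine four_bound _ _ _ _ _ _ _ _ M m0 m1 m2 m3 ?_ ?_ ?_ ?_
    · rw [abs_le]; constructor <;> linarith only [l00, k00, l10, k10, l20, k20, l30, k30]
    · rw [abs_le]; constructor <;> linarith only [l01, k01, l11, k11, l21, k21, l31, k31]
    · rw [abs_le]; constructor <;> linarith only [l02, k02, l12, k12, l22, k22, l32, k32]
    · rw [abs_le]; constructor <;> linarith only [l03, k03, l13, k13, l23, k23, l33, k33]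

theorem resid : |T0 1.085196 0.699295 0.932460 1.022507 - 1.085196| ≤ 0.00005 ∧ |T1 1.085196 0.699295 0.932460 1.022507 - 0.699295| ≤ 0.00005 ∧ |T2 1.085196 0.699295 0.932460 1.022507 - 0.932460| ≤ 0.00005 ∧ |T3 1.085196 0.699295 0.932460 1.022507 - 1.022507| ≤ 0.00005 := by
  simp only [T0, T1, T2, T3, f1, f2, f3, f4, abs_le]
  norm_num

noncomputable def ctr : Fin 4 → ℝ := ![1.085196, 0.699295, 0.932460, 1.022507]

noncomputable def TT (v : Fin 4 → ℝ) : Fin 4 → ℝ :=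
  ![T0 (v 0) (v 1) (v 2) (v 3), T1 (v 0) (v 1) (v 2) (v 3), T2 (v 0) (v 1) (v 2) (v 3),
    T3 (v 0) (v 1) (v 2) (v 3)]

theorem mem_box (v : Fin 4 → ℝ) (hv : v ∈ Metric.closedBall ctr 0.0001) :
    (1.085096 ≤ v 0 ∧ v 0 ≤ 1.085296) ∧ (0.699195 ≤ v 1 ∧ v 1 ≤ 0.699395) ∧ (0.932360 ≤ v 2 ∧ v 2 ≤ 0.932560) ∧ (1.022407 ≤ v 3 ∧ v 3 ≤ 1.022607) := by
  rw [Metric.mem_closedBall, dist_pi_le_iff (by norm_num)] at hv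
  have h0 := hv 0
  have h1 := hv 1
  have h2 := hv 2
  have h3 := hv 3
  simp only [ctr, Real.dist_eq, abs_le, Matrix.cons_val] at h0 h1 h2 h3
  refine ⟨⟨?_, ?_⟩, ⟨?_, ?_⟩, ⟨?_, ?_⟩, ⟨?_, ?_⟩⟩ <;> linarith

theorem TT_contr (v w : Fin 4 → ℝ) (hv : v ∈ Metric.closedBall ctr 0.0001)
    (hw : w ∈ Metric.closedBall ctr 0.0001) : dist (TT v) (TT w) ≤ dist v w / 2 := by
  obtain ⟨⟨a1, a2⟩, ⟨b1, b2⟩, ⟨c1, c2⟩, ⟨d1, d2⟩⟩ := mem_box v hv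
  obtain ⟨⟨p1, p2⟩, ⟨q1, q2⟩, ⟨r1, r2⟩, ⟨s1, s2⟩⟩ := mem_box w hw
  have hd : ∀ i, |v i - w i| ≤ dist v w := fun i => by
    rw [← Real.dist_eq]; exact dist_le_pi_dist v w i
  obtain ⟨k0, k1, k2, k3⟩ := contr _ _ _ _ _ _ _ _ _ a1 a2 b1 b2 c1 c2 d1 d2 p1 p2 q1 q2 r1 r2 s1 s2
    (hd 0) (hd 1) (hd 2) (hd 3)
  rw [dist_pi_le_iff (by positivity)]
  intro i
  rw [Real.dist_eq]
  fin_cases i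
  · exact k0
  · exact k1
  · exact k2
  · exact k3

theorem TT_ctr : dist (TT ctr) ctr ≤ 0.00005 := by
  obtain ⟨k0, k1, k2, k3⟩ := resid
  rw [dist_pi_le_iff (by norm_num)]
  intro i
  rw [Real.dist_eq]
  fin_cases i
  · exact k0
  · exact k1
  · exact k2
  · exact k3

theorem exists_fix : ∃ v ∈ Metric.closedBall ctr 0.0001, TT v = v := by
  have hc : ctr ∈ Metric.closedBall ctr 0.0001 := Metric.mem_closedBall_self (by norm_num)
  have hm : Set.MapsTo TT (Metric.closedBall ctr 0.0001) (Metric.closedBall ctr 0.0001) := by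
    intro v hv
    have h1 := TT_contr v ctr hv hc
    have h2 := TT_ctr
    have h3 := dist_triangle (TT v) (TT ctr) ctr
    rw [Metric.mem_closedBall] at hv ⊢
    linarith
  have hK : ContractingWith (1/2) (hm.restrict TT _ _) := by
    refine ⟨by norm_num [← NNReal.coe_lt_coe], LipschitzWith.of_dist_le_mul ?_⟩
    rintro ⟨v, hv⟩ ⟨w, hw⟩
    have := TT_contr v w hv hw
    simp only [Subtype.dist_eq, Set.MapsTo.val_restrict_apply]
    push_cast
    linarith
  obtain ⟨y, hy, hfix, -⟩ := hK.exists_fixedPoint' Metric.isClosed_closedBall.isComplete hm hc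
    (edist_ne_top _ _)
  exact ⟨y, hy, hfix⟩

theorem stmt0 :
    ∃ u0 u1 x1 x2 : ℝ,
      1.08 < u0 ∧ u0 < 1.09 ∧
      0.69 < u1 ∧ u1 < 0.70 ∧
      0.93 < x1 ∧ x1 < 0.94 ∧
      1.02 < x2 ∧ x2 < 1.03 ∧
      (f1 u0 u1 x1 x2 = 0 ∧ f2 u0 u1 x1 x2 = 0 ∧ f3 u0 u1 x1 x2 = 0 ∧ f4 u0 u1 x1 x2 = 0) ∧
      u0 ≠ x2 ∧ x1 ≠ 1 ∧ x1 ≠ x2 := by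
  obtain ⟨v, hv, hf⟩ := exists_fix
  obtain ⟨⟨a1, a2⟩, ⟨b1, b2⟩, ⟨c1, c2⟩, ⟨d1, d2⟩⟩ := mem_box v hv
  have e0 : T0 (v 0) (v 1) (v 2) (v 3) = v 0 := congrFun hf 0
  have e1 : T1 (v 0) (v 1) (v 2) (v 3) = v 1 := congrFun hf 1
  have e2 : T2 (v 0) (v 1) (v 2) (v 3) = v 2 := congrFun hf 2
  have e3 : T3 (v 0) (v 1) (v 2) (v 3) = v 3 := congrFun hf 3
  unfold T0 at e0
  unfold T1 at e1
  unfold T2 at e2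
  unfold T3 at e3
  refine ⟨v 0, v 1, v 2, v 3, ?_, ?_, ?_, ?_, ?_, ?_, ?_, ?_, ⟨?_, ?_, ?_, ?_⟩, ?_, ?_, ?_⟩
  iterate 8 linarith
  iterate 4 linarith
  · intro h
    linarith
  · intro h
    linarith
  · intro h
    linarith
end

section
/- There exist five quintuples of real numbers (u0, u1, u2, x2, x3) satisfying g0 = g1 = g2 = g3 = g4 = 0, one in each of the following boxes: (i) 0.26 < u0 < 0.27, 0.21 < u1 < 0.22, 0.11 < u2 < 0.12, 1.00 < x2 < 1.01, 0.255 < x3 < 0.256; (ii) 0.54 < u0 < 0.55, 0.28 < u1 < 0.29, 1.17 < u2 < 1.18, 1.02 < x2 < 1.03, 0.49 < x3 < 0.50; (iii) 0.72 < u0 < 0.73, 0.14 < u1 < 0.15, 0.11 < u2 < 0.12, 0.49 < x2 < 0.50, 1.10 < x3 < 1.11; (iv) 1.36 < u0 < 1.37, 1.44 < u1 < 1.45, 0.15 < u2 < 0.16, 0.95 < x2 < 0.96, 1.38 < x3 < 1.39; (v) 2.49 < u0 < 2.50, 0.25 < u1 < 0.26, 0.17 < u2 < 0.18, 1.74 <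 x2 < 1.75, 2.47 < x3 < 2.48. (These give five non-isometric non-naturally reductive left-invariant Einstein metrics on F4.) -/
noncomputable def g0 (u0 u1 u2 x2 x3 : ℝ) : ℝ :=
  2*u0*u1*x2 ^ 2*x3 ^ 2 + 3*u0*u1*x2 ^ 2 + 4*u0*u1*x3 ^ 2 - 6*u1 ^ 2*x2 ^ 2*x3 ^ 2 - u1 ^ 2*x2 ^ 2 - 2*x2 ^ 2*x3 ^ 2

noncomputable def g1 (u0 u1 u2 x2 x3 : ℝ) : ℝ :=
  12*u1 ^ 2*u2*x2 ^ 2*x3 ^ 2 + 2*u1 ^ 2*u2*x2 ^ 2 - 10*u1*u2 ^ 2*x2 ^ 2*x3 ^ 2 - 5*u1*u2 ^ 2*x3 ^ 2 - 3*u1*x2 ^ 2*x3 ^ 2 + 4*u2*x2 ^ 2*x3 ^ 2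

noncomputable def g2 (u0 u1 u2 x2 x3 : ℝ) : ℝ :=
  u0*u2*x2 ^ 2*x3 + 9*u1*u2*x2 ^ 2*x3 + 50*u2 ^ 2*x2 ^ 2*x3 + 15*u2 ^ 2*x3 + 18*u2*x2 ^ 3*x3 + 6*u2*x2 ^ 3 - 108*u2*x2 ^ 2*x3 + 6*u2*x2*x3 ^ 2 - 6*u2*x2 + 9*x2 ^ 2*x3

noncomputable def g3 (u0 u1 u2 x2 x3 : ℝ) : ℝ :=
  -u0*x2 ^ 2*x3 + 4*u0*x3 - 9*u1*x2 ^ 2*x3 - 20*u2*x2 ^ 2*x3 + 20*u2*x3 - 36*x2 ^ 3*x3 - 18*x2 ^ 3 + 108*x2 ^ 2*x3 + 6*x2*x3 ^ 2 - 72*x2*x3 + 18*x2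

noncomputable def g4 (u0 u1 u2 x2 x3 : ℝ) : ℝ :=
  9*u0*x2 ^ 2 - 4*u0*x3 ^ 2 + 9*u1*x2 ^ 2 - 20*u2*x3 ^ 2 + 18*x2 ^ 3*x3 ^ 2 + 48*x2 ^ 3*x3 - 108*x2 ^ 2*x3 - 48*x2*x3 ^ 3 + 72*x2*x3 ^ 2 + 24*x2*x3


namespace F4

/-- polynomial expressions in five variables -/
inductive Ex where
  | c : ℤ → Ex
  | v : Fin 5 → Ex
  | add : Ex → Ex → Ex
  | mul : Ex → Ex → Ex

/-- value of an expression -/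
noncomputable def Ex.ev (x : Fin 5 → ℝ) : Ex → ℝ
  | .c q => (q : ℝ)
  | .v i => x i
  | .add p q => p.ev x + q.ev x
  | .mul p q => p.ev x * q.ev x

/-- first order Taylor model: constant, linear part, Lipschitz constant of the rest -/
structure TM where
  a : ℚ
  l : Fin 5 → ℚ
  L : ℚ

def s5 (l : Fin 5 → ℚ) : ℚ := |l 0| + |l 1| + |l 2| + |l 3| + |l 4|

def Ex.tm (r : ℚ) (c : Fin 5 → ℚ) : Ex → TM
  | .c q => ⟨q, fun _ => 0, 0⟩
  | .v i => ⟨c i, fun j => if j = i then 1 else 0, 0⟩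
  | .add p q => ⟨(p.tm r c).a + (q.tm r c).a, fun j => (p.tm r c).l j + (q.tm r c).l j,
      (p.tm r c).L + (q.tm r c).L⟩
  | .mul p q => ⟨(p.tm r c).a * (q.tm r c).a,
      fun j => (p.tm r c).a * (q.tm r c).l j + (q.tm r c).a * (p.tm r c).l j,
      |(p.tm r c).a| * (q.tm r c).L + |(q.tm r c).a| * (p.tm r c).L
        + 2 * r * (s5 (p.tm r c).l + (p.tm r c).L) * (s5 (q.tm r c).l + (q.tm r c).L)⟩

/-- Lipschitz on the ball of radius `r` around the origin, vanishing there -/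
def Lip (r : ℝ) (f : (Fin 5 → ℝ) → ℝ) (K : ℝ) : Prop :=
  0 ≤ K ∧ f 0 = 0 ∧ ∀ d e : Fin 5 → ℝ, ‖d‖ ≤ r → ‖e‖ ≤ r → |f d - f e| ≤ K * ‖d - e‖

def lin (l : Fin 5 → ℚ) (d : Fin 5 → ℝ) : ℝ := ∑ i, (l i : ℝ) * d i

theorem Lip.add {r f g K M} (hf : Lip r f K) (hg : Lip r g M) :
    Lip r (fun d => f d + g d) (K + M) := by
  obtain ⟨a, b, c⟩ := hf
  obtain ⟨a', b', c'⟩ := hg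
  refine ⟨by positivity, by simp [b, b'], fun d e hd he => ?_⟩
  have h1 := c d e hd he
  have h2 := c' d e hd he
  calc |f d + g d - (f e + g e)| = |(f d - f e) + (g d - g e)| := by ring_nf
    _ ≤ |f d - f e| + |g d - g e| := abs_add_le _ _
    _ ≤ _ := by linarith

theorem Lip.smul {r f K} (q : ℝ) (hf : Lip r f K) : Lip r (fun d => q * f d) (|q| * K) := by
  obtain ⟨a, b, c⟩ := hf
  refine ⟨by positivity, by simp [b], fun d e hd he => ?_⟩
  rw [← mul_sub, abs_mul, mul_assoc]
  exact mul_le_mul_of_nonneg_left (c d e hd he) (abs_nonneg _)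

theorem Lip.mul {r f g K M} (hf : Lip r f K) (hg : Lip r g M) :
    Lip r (fun d => f d * g d) (2 * r * K * M) ∨ r < 0 := by
  by_cases hr : r < 0
  · exact Or.inr hr
  push Not at hr
  left
  obtain ⟨a, b, c⟩ := hf
  obtain ⟨a', b', c'⟩ := hg
  refine ⟨by positivity, by simp [b], fun d e hd he => ?_⟩
  have h0 : ‖(0 : Fin 5 → ℝ)‖ ≤ r := by simpa using hr
  have h1 := c d e hd he
  have h2 := c' d e hd he
  have h3 := c d 0 hd h0
  have h4 := c' e 0 he h0
  simp only [b, b', sub_zero] at h3 h4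
  have h5 : |f d| ≤ K * r := h3.trans (mul_le_mul_of_nonneg_left hd a)
  have h6 : |g e| ≤ M * r := h4.trans (mul_le_mul_of_nonneg_left he a')
  calc |f d * g d - f e * g e| = |f d * (g d - g e) + (f d - f e) * g e| := by ring_nf
    _ ≤ |f d| * |g d - g e| + |f d - f e| * |g e| := by
        rw [← abs_mul, ← abs_mul]; exact abs_add_le _ _
    _ ≤ (K * r) * (M * ‖d - e‖) + (K * ‖d - e‖) * (M * r) := by gcongr
    _ = _ := by ring

theorem Lip.coord (r : ℝ) (i : Fin 5) : Lip r (fun d => d i) 1 := by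
  refine ⟨by norm_num, by simp, fun d e _ _ => ?_⟩
  have := norm_le_pi_norm (d - e) i
  simpa using this

theorem Lip.lin (r : ℝ) (l : Fin 5 → ℚ) : Lip r (lin l) (s5 l : ℚ) := by
  have h := ((((Lip.coord r 0).smul (l 0 : ℝ)).add ((Lip.coord r 1).smul (l 1 : ℝ))).add
    ((Lip.coord r 2).smul (l 2 : ℝ))).add ((Lip.coord r 3).smul (l 3 : ℝ)) |>.add
    ((Lip.coord r 4).smul (l 4 : ℝ))
  convert h using 1
  · funext d
    simp [F4.lin, Fin.sum_univ_five]
  · simp [s5]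

def Ok (r : ℚ) (f : (Fin 5 → ℝ) → ℝ) (t : TM) : Prop :=
  Lip r (fun d => f d - t.a - lin t.l d) t.L

theorem Ok.lip {r f t} (h : Ok r f t) : Lip r (fun d => f d - t.a) (s5 t.l + t.L : ℚ) := by
  have := (Lip.lin r t.l).add h
  convert this using 1
  · funext d; ring
  · push_cast; rfl

theorem lin_comb (p q : ℚ) (l m : Fin 5 → ℚ) (d) :
    lin (fun j => p * l j + q * m j) d = p * lin l d + q * lin m d := by
  simp only [lin, Finset.mul_sum, ← Finset.sum_add_distrib]
  refine Finset.sum_congr rfl fun i _ => ?_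
  push_cast; ring

theorem ite_cast (p : Prop) [Decidable p] :
    (((if p then 1 else 0 : ℚ)) : ℝ) = if p then 1 else 0 := by
  split_ifs <;> simp

theorem ok_tm (r : ℚ) (hr : 0 ≤ r) (c : Fin 5 → ℚ) (e : Ex) :
    Ok r (fun d => e.ev (fun i => (c i : ℝ) + d i)) (e.tm r c) := by
  induction e with
  | c q => simp [Ok, Ex.tm, Ex.ev, lin, Lip]
  | v i => simp [Ok, Ex.tm, Ex.ev, lin, Lip, ite_cast]
  | add p q hp hq =>
    have h := Lip.add hp hq
    unfold Ok
    convert h using 1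
    · funext d
      have := lin_comb 1 1 (p.tm r c).l (q.tm r c).l d
      simp only [one_mul, Rat.cast_one] at this
      simp only [Ex.tm, Ex.ev, this]
      push_cast; ring
    · simp [Ex.tm]
  | mul p q hp hq =>
    have h3 := (hp.lip.mul hq.lip).resolve_right (by push Not; exact_mod_cast hr)
    have h := ((Lip.smul ((p.tm r c).a : ℝ) hq).add (Lip.smul ((q.tm r c).a : ℝ) hp)).add h3
    unfold Ok
    convert h using 1
    · funext d
      simp only [Ex.tm, Ex.ev, lin_comb]
      push_cast; ring
    · simp [Ex.tm]

def sum5 (f : Fin 5 → ℚ) : ℚ := f 0 + f 1 + f 2 + f 3 + f 4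

/-- the numerical test -/
def test (r : ℚ) (t : Fin 5 → TM) (A : Fin 5 → Fin 5 → ℚ) : Prop :=
  ∀ i, |sum5 fun j => A i j * (t j).a| ≤ r / 2 ∧
    s5 (fun k => (if k = i then 1 else 0) - sum5 fun j => A i j * (t j).l k)
      + (sum5 fun j => |A i j| * (t j).L) ≤ 1 / 2

instance (r t A) : Decidable (test r t A) := by unfold test; infer_instance

theorem newton (r : ℚ) (hr : 0 < r) (c : Fin 5 → ℚ) (G : Fin 5 → Ex)
    (A B : Fin 5 → Fin 5 → ℚ)
    (hBA : ∀ i k, (sum5 fun j => B i j * A j k) = if i = k then 1 else 0)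
    (ht : test r (fun j => (G j).tm r c) A) :
    ∃ x : Fin 5 → ℝ, (∀ i, |x i - c i| ≤ r) ∧ ∀ j, (G j).ev x = 0 := by
  set t : Fin 5 → TM := fun j => (G j).tm r c with htdef
  set F : Fin 5 → (Fin 5 → ℝ) → ℝ := fun j d => (G j).ev (fun i => (c i : ℝ) + d i) with hF
  have hok : ∀ j, Ok r (F j) (t j) := fun j => ok_tm r hr.le c (G j)
  set T : (Fin 5 → ℝ) → (Fin 5 → ℝ) := fun d i => d i - ∑ j, (A i j : ℝ) * F j d with hT
  have hrR : (0 : ℝ) < r := by exact_mod_cast hr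
  have hlip : ∀ i, Lip r (fun d => T d i + (sum5 fun j => A i j * (t j).a : ℚ)) (1 / 2) := by
    intro i
    have h1 := Lip.lin (r : ℝ) (fun k => (if k = i then 1 else 0) - sum5 fun j => A i j * (t j).l k)
    have h2 : ∀ j, Lip r _ _ := fun j => Lip.smul (-(A i j : ℝ)) (hok j)
    have h := h1.add (((((h2 0).add (h2 1)).add (h2 2)).add (h2 3)).add (h2 4))
    have hle := (ht i).2
    have hle' : ((s5 (fun k => (if k = i then 1 else 0) - sum5 fun j => A i j * (t j).l k)
      + (sum5 fun j => |A i j| * (t j).L) : ℚ) : ℝ) ≤ ((1 / 2 : ℚ) : ℝ) := by exact_mod_cast hle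
    have h' : Lip r (fun d => T d i + (sum5 fun j => A i j * (t j).a : ℚ))
      ((s5 (fun k => (if k = i then 1 else 0) - sum5 fun j => A i j * (t j).l k)
      + (sum5 fun j => |A i j| * (t j).L) : ℚ) : ℝ) := by
      convert h using 1
      · funext d
        have hd : d i = ∑ k, (((if k = i then 1 else 0 : ℚ)) : ℝ) * d k := by
          simp only [ite_cast]; simp
        simp only [hT]
        rw [hd]
        simp only [lin, sum5, Fin.sum_univ_five]
        push_cast
        ring
      · simp [sum5]
    refine ⟨by norm_num, h'.2.1, fun d e hd he => (h'.2.2 d e hd he).trans ?_⟩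
    gcongr
    simpa using hle'
  have hdiff : ∀ d e, ‖d‖ ≤ r → ‖e‖ ≤ r → ‖T d - T e‖ ≤ 1 / 2 * ‖d - e‖ := by
    intro d e hd he
    rw [pi_norm_le_iff_of_nonneg (by positivity)]
    intro i
    have := (hlip i).2.2 d e hd he
    simpa using this
  have hT0 : ‖T 0‖ ≤ r / 2 := by
    rw [pi_norm_le_iff_of_nonneg (by positivity)]
    intro i
    have h := (hlip i).2.1
    have h1 := (ht i).1
    have h2 : |((sum5 fun j => A i j * (t j).a : ℚ) : ℝ)| ≤ r / 2 := by exact_mod_cast h1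
    rw [Real.norm_eq_abs, eq_neg_of_add_eq_zero_left h, abs_neg]
    exact h2
  have hmaps : Set.MapsTo T (Metric.closedBall 0 (r : ℝ)) (Metric.closedBall 0 (r : ℝ)) := by
    intro d hd
    rw [mem_closedBall_zero_iff] at hd ⊢
    have h1 := hdiff d 0 hd (by simpa using hrR.le)
    have h2 : ‖T d‖ ≤ ‖T d - T 0‖ + ‖T 0‖ := by
      simpa using norm_add_le (T d - T 0) (T 0)
    rw [sub_zero] at h1
    linarith
  have hcontr : ContractingWith (1 / 2) (hmaps.restrict T _ _) := by
    refine ⟨?_, ?_⟩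
    · rw [← NNReal.coe_lt_coe]; norm_num
    · refine LipschitzWith.of_dist_le_mul ?_
      rintro ⟨d, hd⟩ ⟨e, he⟩
      rw [mem_closedBall_zero_iff] at hd he
      have := hdiff d e hd he
      rw [Subtype.dist_eq, Subtype.dist_eq, dist_eq_norm, dist_eq_norm]
      simpa using this
  obtain ⟨d, hd, hfix, -⟩ := hcontr.exists_fixedPoint'
    (Metric.isClosed_closedBall.isComplete) hmaps
    (x := 0) (by simpa using hrR.le) (edist_ne_top _ _)
  rw [mem_closedBall_zero_iff] at hd
  refine ⟨fun i => c i + d i, fun i => ?_, ?_⟩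
  · have := (norm_le_pi_norm d i).trans hd
    simpa using this
  · have hz : ∀ i, ∑ j, (A i j : ℝ) * F j d = 0 := by
      intro i
      have : T d i = d i := congrFun hfix i
      simp only [hT] at this
      linarith
    intro i
    have hB : ∀ k, ∑ j, (B i j : ℝ) * (A j k : ℝ) = if i = k then 1 else 0 := by
      intro k
      have := congrArg (fun q : ℚ => (q : ℝ)) (hBA i k)
      simp only [sum5] at this
      push_cast at this
      rw [Fin.sum_univ_five]
      rw [ite_cast] at this
      exact this
    have h : ∑ j, (B i j : ℝ) * ∑ k, (A j k : ℝ) * F k d = 0 := by simp [hz]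
    simp only [Finset.mul_sum] at h
    rw [Finset.sum_comm] at h
    simp only [← mul_assoc, ← Finset.sum_mul, hB] at h
    simpa using h

def G0 : Ex :=
  .add (.add (.add (.add (.add (.mul (.mul (.mul (.mul (.c 2) (.v 0)) (.v 1)) (.mul (.v 3) (.v 3))) (.mul (.v 4) (.v 4))) (.mul (.mul (.mul (.c 3) (.v 0)) (.v 1)) (.mul (.v 3) (.v 3)))) (.mul (.mul (.mul (.c 4) (.v 0)) (.v 1)) (.mul (.v 4) (.v 4)))) (.mul (.c (-1)) (.mul (.mul (.mul (.c 6) (.mul (.v 1) (.v 1))) (.mul (.v 3) (.v 3))) (.mul (.v 4) (.v 4))))) (.mul (.c (-1)) (.mul (.mul (.v 1) (.v 1)) (.mul (.v 3) (.v 3))))) (.mul (.c (-1)) (.mul (.mul (.c 2) (.mul (.v 3) (.v 3))) (.mul (.v 4) (.v 4))))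

def G1 : Ex :=
  .add (.add (.add (.add (.add (.mul (.mul (.mul (.mul (.c 12) (.mul (.v 1) (.v 1))) (.v 2)) (.mul (.v 3) (.v 3))) (.mul (.v 4) (.v 4))) (.mul (.mul (.mul (.c 2) (.mul (.v 1) (.v 1))) (.v 2)) (.mul (.v 3) (.v 3)))) (.mul (.c (-1)) (.mul (.mul (.mul (.mul (.c 10) (.v 1)) (.mul (.v 2) (.v 2))) (.mul (.v 3) (.v 3))) (.mul (.v 4) (.v 4))))) (.mul (.c (-1)) (.mul (.mul (.mul (.c 5) (.v 1)) (.mul (.v 2) (.v 2))) (.mul (.v 4) (.v 4))))) (.mul (.c (-1)) (.mul (.mul (.mul (.c 3) (.v 1)) (.mul (.v 3) (.v 3))) (.mul (.v 4) (.v 4))))) (.mul (.mul (.mul (.c 4) (.v 2)) (.mul (.v 3) (.v 3))) (.mul (.v 4) (.v 4)))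

def G2 : Ex :=
  .add (.add (.add (.add (.add (.add (.add (.add (.add (.mul (.mul (.mul (.v 0) (.v 2)) (.mul (.v 3) (.v 3))) (.v 4)) (.mul (.mul (.mul (.mul (.c 9) (.v 1)) (.v 2)) (.mul (.v 3) (.v 3))) (.v 4))) (.mul (.mul (.mul (.c 50) (.mul (.v 2) (.v 2))) (.mul (.v 3) (.v 3))) (.v 4))) (.mul (.mul (.c 15) (.mul (.v 2) (.v 2))) (.v 4))) (.mul (.mul (.mul (.c 18) (.v 2)) (.mul (.mul (.v 3) (.v 3)) (.v 3))) (.v 4))) (.mul (.mul (.c 6) (.v 2)) (.mul (.mul (.v 3) (.v 3)) (.v 3)))) (.mul (.c (-1)) (.mul (.mul (.mul (.c 108) (.v 2)) (.mul (.v 3) (.v 3))) (.v 4)))) (.mul (.mul (.mul (.c 6) (.v 2)) (.v 3)) (.mul (.v 4) (.v 4)))) (.mul (.c (-1)) (.mul (.mul (.c 6) (.v 2)) (.v 3)))) (.mul (.mul (.c 9) (.mul (.v 3) (.v 3))) (.v 4))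

def G3 : Ex :=
  .add (.add (.add (.add (.add (.add (.add (.add (.add (.add (.mul (.mul (.mul (.c (-1)) (.v 0)) (.mul (.v 3) (.v 3))) (.v 4)) (.mul (.mul (.c 4) (.v 0)) (.v 4))) (.mul (.c (-1)) (.mul (.mul (.mul (.c 9) (.v 1)) (.mul (.v 3) (.v 3))) (.v 4)))) (.mul (.c (-1)) (.mul (.mul (.mul (.c 20) (.v 2)) (.mul (.v 3) (.v 3))) (.v 4)))) (.mul (.mul (.c 20) (.v 2)) (.v 4))) (.mul (.c (-1)) (.mul (.mul (.c 36) (.mul (.mul (.v 3) (.v 3)) (.v 3))) (.v 4)))) (.mul (.c (-1)) (.mul (.c 18) (.mul (.mul (.v 3) (.v 3)) (.v 3))))) (.mul (.mul (.c 108) (.mul (.v 3) (.v 3))) (.v 4))) (.mul (.mul (.c 6) (.v 3)) (.mul (.v 4) (.v 4)))) (.mul (.c (-1)) (.mul (.mul (.c 72) (.v 3)) (.v 4)))) (.mul (.c 18) (.v 3))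

def G4 : Ex :=
  .add (.add (.add (.add (.add (.add (.add (.add (.add (.mul (.mul (.c 9) (.v 0)) (.mul (.v 3) (.v 3))) (.mul (.c (-1)) (.mul (.mul (.c 4) (.v 0)) (.mul (.v 4) (.v 4))))) (.mul (.mul (.c 9) (.v 1)) (.mul (.v 3) (.v 3)))) (.mul (.c (-1)) (.mul (.mul (.c 20) (.v 2)) (.mul (.v 4) (.v 4))))) (.mul (.mul (.c 18) (.mul (.mul (.v 3) (.v 3)) (.v 3))) (.mul (.v 4) (.v 4)))) (.mul (.mul (.c 48) (.mul (.mul (.v 3) (.v 3)) (.v 3))) (.v 4))) (.mul (.c (-1)) (.mul (.mul (.c 108) (.mul (.v 3) (.v 3))) (.v 4)))) (.mul (.c (-1)) (.mul (.mul (.c 48) (.v 3)) (.mul (.mul (.v 4) (.v 4)) (.v 4))))) (.mul (.mul (.c 72) (.v 3)) (.mul (.v 4) (.v 4)))) (.mul (.mul (.c 24) (.v 3)) (.v 4))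

def G : Fin 5 → Ex := ![G0, G1, G2, G3, G4]

theorem ev0 (x : Fin 5 → ℝ) : G0.ev x = g0 (x 0) (x 1) (x 2) (x 3) (x 4) := by
  simp only [G0, Ex.ev, g0]
  push_cast
  ring

theorem ev1 (x : Fin 5 → ℝ) : G1.ev x = g1 (x 0) (x 1) (x 2) (x 3) (x 4) := by
  simp only [G1, Ex.ev, g1]
  push_cast
  ring

theorem ev2 (x : Fin 5 → ℝ) : G2.ev x = g2 (x 0) (x 1) (x 2) (x 3) (x 4) := by
  simp only [G2, Ex.ev, g2]
  push_cast
  ring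

theorem ev3 (x : Fin 5 → ℝ) : G3.ev x = g3 (x 0) (x 1) (x 2) (x 3) (x 4) := by
  simp only [G3, Ex.ev, g3]
  push_cast
  ring

theorem ev4 (x : Fin 5 → ℝ) : G4.ev x = g4 (x 0) (x 1) (x 2) (x 3) (x 4) := by
  simp only [G4, Ex.ev, g4]
  push_cast
  ring

def c0 : Fin 5 → ℚ := ![26967359/100000000, 5281733/25000000, 5723949/50000000, 100392689/100000000, 25594917/100000000]

def A0 : Fin 5 → Fin 5 → ℚ := ![![-195137/100000, 577091/25000, 4103/10000, 1613/25000, 26649/100000],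
    ![182309/100000, -2267603/100000, -823/2000, -2389/50000, -1439/10000],
    ![-2351/100000, 8237/100000, -1327/25000, -287/100000, 47/20000],
    ![-32713/100000, 307697/100000, 1381/25000, -1327/50000, 1447/50000],
    ![-181037/100000, 917891/100000, 3207/20000, 1593/50000, 14509/100000]]

def B0 : Fin 5 → Fin 5 → ℚ := ![![542133091024434850000/750807147682126465861, 246577909683728625000/750807147682126465861, -63034231667700000/750807147682126465861, -22369374902221775000/750807147682126465861, -746729398190766950000/750807147682126465861],
    ![13650254979650000/750807147682126465861, -56440529942920775000/750807147682126465861, 256523440167921300000/750807147682126465861, 1360916791304725000/750807147682126465861, -60429009108627750000/750807147682126465861],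
    ![366708225961620850000/12763721510596149919637, 3381942359049888575000/12763721510596149919637, -234406329665761643500000/12763721510596149919637, 22531899070555572675000/12763721510596149919637, 1983039120155959850000/12763721510596149919637],
    ![9785742827182113550000/12763721510596149919637, -29627424380747785975000/12763721510596149919637, -523601081777007800000/12763721510596149919637, -371602103230626602475000/12763721510596149919637, 26771013547667944050000/12763721510596149919637],
    ![112427733073296137450000/12763721510596149919637, 115772636290506506975000/12763721510596149919637, -16724086847356287900000/12763721510596149919637, 50488987298861437575000/12763721510596149919637, -13504117459786436850000/12763721510596149919637]]

def c1 : Fin 5 → ℚ := ![27337799/50000000, 28246829/100000000, 5857993/5000000, 12784539/12500000, 49280351/100000000]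

def A1 : Fin 5 → Fin 5 → ℚ := ![![-12947/20000, 9699/25000, 163/4000, 4639/50000, 9977/50000],
    ![4429/20000, -4077/10000, -209/12500, -1113/50000, -1459/50000],
    ![1773/25000, 4819/100000, 2833/100000, -53/25000, -631/50000],
    ![-57/400, 5617/100000, 483/100000, -509/50000, 1171/50000],
    ![-96119/100000, 3207/100000, 519/25000, 123/2000, 341/2500]]

def B1 : Fin 5 → Fin 5 → ℚ := ![![874793823202450000/670712247948370993, 719387018846100000/670712247948370993, 523220874950000/4694985735638596951, -197164272559400000/670712247948370993, -7643862243492550000/4694985735638596951],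
    ![-339234064350000/4694985735638596951, -11801033976940300000/4694985735638596951, -34795827283749550000/32864900149470178657, 4324159322299100000/4694985735638596951, -26085274079120650000/32864900149470178657],
    ![2840841817903800000/4694985735638596951, 25527586497932900000/4694985735638596951, 1147032440695745700000/32864900149470178657, 17387229118248600000/4694985735638596951, 94364522313715100000/32864900149470178657],
    ![6826817906352650000/4694985735638596951, -21798235924955500000/4694985735638596951, -15007032278725800000/32864900149470178657, -216253393745529450000/4694985735638596951, 155975969486934850000/32864900149470178657],
    ![39641401952520625000/4694985735638596951, 44203601421121200000/4694985735638596951, -159604387096793575000/32864900149470178657, 84115562752195750000/4694985735638596951, -214666439635262975000/32864900149470178657]]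

def c2 : Fin 5 → ℚ := ![36330319/50000000, 447771/3125000, 11340863/100000000, 49841277/100000000, 110606767/100000000]

def A2 : Fin 5 → Fin 5 → ℚ := ![![35819/50000, 299623/100000, 768/3125, 1599/20000, -73/10000],
    ![-633/100000, -29269/25000, -1529/25000, 17/20000, -151/100000],
    ![131/50000, -583/100000, -1349/25000, -97/100000, -127/100000],
    ![-9259/50000, -93349/100000, -1203/100000, 943/25000, -361/100000],
    ![-3949/100000, -10887/50000, 1253/50000, -1671/100000, -3909/100000]]

def B2 : Fin 5 → Fin 5 → ℚ := ![![1963320967947812500/2193285207119878977, 25958158979789066875/6579855621359636931, 964775978735000/2193285207119878977, -1921470732428361250/939979374479948133, -860620610016701875/6579855621359636931],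
    ![-91222240512500/2193285207119878977, -5887559363642301875/6579855621359636931, 2199709288729685000/2193285207119878977, 42373520820451250/939979374479948133, -14312070990683125/6579855621359636931],
    ![68934876368987500/2193285207119878977, 1842825532746308125/6579855621359636931, -40276601182856935000/2193285207119878977, -260303881459588750/939979374479948133, 3984123541679226875/6579855621359636931],
    ![1300066154686812500/313326458159982711, -2324568315539798125/939979374479948133, 5208836654584315000/313326458159982711, 15947209146787041250/939979374479948133, -2618993177412216875/939979374479948133],
    ![-5828930990164225000/2193285207119878977, 14708504513863321250/6579855621359636931, -53661091037618930000/2193285207119878977, -5278808168637447500/939979374479948133, -156985613589567091250/6579855621359636931]]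

def c3 : Fin 5 → ℚ := ![8508341/6250000, 36240257/25000000, 3895649/25000000, 95415861/100000000, 138490539/100000000]

def A3 : Fin 5 → Fin 5 → ℚ := ![![-8773/50000, 36233/25000, 101809/100000, 10021/10000, 4453/50000],
    ![7301/100000, -5293/20000, -3663/20000, -33163/100000, -3017/100000],
    ![-193/25000, 5221/100000, 1003/50000, 3507/100000, 37/12500],
    ![-15379/100000, 90799/100000, 15893/25000, 8589/12500, 6291/100000],
    ![-13609/100000, 16373/20000, 58063/100000, 60857/100000, 4439/100000]]

def B3 : Fin 5 → Fin 5 → ℚ := ![![113195007627032000000/5620017009882656151, -79232393983890050000/5620017009882656151, 31548482665300000/5620017009882656151, -178340277320094700000/5620017009882656151, -28211201690898050000/5620017009882656151],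
    ![-8109662832100000/5620017009882656151, 24692854566135100000/5620017009882656151, 239551437305697700000/5620017009882656151, 4027786494179900000/5620017009882656151, -4882960890777200000/5620017009882656151],
    ![372921716386100000/1873339003294218717, 3311665458815200000/1873339003294218717, -111961873127844200000/1873339003294218717, 4601364289319000000/1873339003294218717, 2447304704854000000/1873339003294218717],
    ![8014588718986700000/1873339003294218717, -21258996136028900000/1873339003294218717, 4651143847205800000/1873339003294218717, -30773504168500300000/1873339003294218717, 12773835925111000000/1873339003294218717],
    ![972022112662700000/1873339003294218717, 15368799291278950000/1873339003294218717, -71869515415822400000/1873339003294218717, 154695112259508500000/1873339003294218717, -163746077000596550000/1873339003294218717]]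

def c4 : Fin 5 → ℚ := ![249483493/100000000, 12610887/50000000, 17749081/100000000, 136418/78125, 24753269/10000000]

def A4 : Fin 5 → Fin 5 → ℚ := ![![5337/100000, 8247/50000, 383/10000, -31/12500, -3/6250],
    ![49/100000, -2211/100000, -29/6250, -97/100000, -3/25000],
    ![3/10000, 9/10000, -141/50000, -57/100000, -7/100000],
    ![13/25000, 309/25000, 503/100000, -153/25000, -7/12500],
    ![61/50000, 1141/50000, 503/50000, -143/12500, -289/100000]]

def B4 : Fin 5 → Fin 5 → ℚ := ![![8791302181700000/490582431772691, 58442841357800000/490582431772691, -129018882600000/490582431772691, -8707802253000000/490582431772691, -2196389421000000/490582431772691],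
    ![-3214149700000/490582431772691, -20761824722300000/490582431772691, 34296636765500000/490582431772691, 59667579000000/490582431772691, 20340256300000/490582431772691],
    ![665072360000000/490582431772691, 5985055065200000/490582431772691, -151489559998400000/490582431772691, 10510232792500000/490582431772691, 1273736157600000/490582431772691],
    ![1157123909200000/490582431772691, -33253774404400000/490582431772691, -49823272413500000/490582431772691, -117901638515600000/490582431772691, 25241377193700000/490582431772691],
    ![1420474804800000/490582431772691, 13200089770200000/490582431772691, -59347712533400000/490582431772691, 500091966060600000/490582431772691, -266001879435300000/490582431772691]]

theorem sol (c : Fin 5 → ℚ) (A B : Fin 5 → Fin 5 → ℚ)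
    (hBA : ∀ i k, (sum5 fun j => B i j * A j k) = if i = k then 1 else 0)
    (ht : test (1/1000000) (fun j => (G j).tm (1/1000000) c) A) :
    ∃ u0 u1 u2 x2 x3 : ℝ, |u0 - c 0| ≤ 1/1000000 ∧ |u1 - c 1| ≤ 1/1000000 ∧ |u2 - c 2| ≤ 1/1000000
      ∧ |x2 - c 3| ≤ 1/1000000 ∧ |x3 - c 4| ≤ 1/1000000 ∧
      g0 u0 u1 u2 x2 x3 = 0 ∧ g1 u0 u1 u2 x2 x3 = 0 ∧ g2 u0 u1 u2 x2 x3 = 0 ∧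
      g3 u0 u1 u2 x2 x3 = 0 ∧ g4 u0 u1 u2 x2 x3 = 0 := by
  obtain ⟨x, hx, hz⟩ := newton (1/1000000) (by norm_num) c G A B hBA ht
  push_cast at hx
  exact ⟨x 0, x 1, x 2, x 3, x 4, hx 0, hx 1, hx 2, hx 3, hx 4,
    (ev0 x).symm.trans (hz 0), (ev1 x).symm.trans (hz 1), (ev2 x).symm.trans (hz 2),
    (ev3 x).symm.trans (hz 3), (ev4 x).symm.trans (hz 4)⟩

theorem inv0 : ∀ i k, (sum5 fun j => B0 i j * A0 j k) = if i = k then 1 else 0 := by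
  decide +kernel

theorem test0 : test (1/1000000) (fun j => (G j).tm (1/1000000) c0) A0 := by
  decide +kernel

theorem inv1 : ∀ i k, (sum5 fun j => B1 i j * A1 j k) = if i = k then 1 else 0 := by
  decide +kernel

theorem test1 : test (1/1000000) (fun j => (G j).tm (1/1000000) c1) A1 := by
  decide +kernel

theorem inv2 : ∀ i k, (sum5 fun j => B2 i j * A2 j k) = if i = k then 1 else 0 := by
  decide +kernel

theorem test2 : test (1/1000000) (fun j => (G j).tm (1/1000000) c2) A2 := by
  decide +kernel

theorem inv3 : ∀ i k, (sum5 fun j => B3 i j * A3 j k) = if i = k then 1 else 0 := by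
  decide +kernel

theorem test3 : test (1/1000000) (fun j => (G j).tm (1/1000000) c3) A3 := by
  decide +kernel

theorem inv4 : ∀ i k, (sum5 fun j => B4 i j * A4 j k) = if i = k then 1 else 0 := by
  decide +kernel

theorem test4 : test (1/1000000) (fun j => (G j).tm (1/1000000) c4) A4 := by
  decide +kernel

end F4

theorem stmt5 :
    (∃ u0 u1 u2 x2 x3 : ℝ,
      0.26 < u0 ∧ u0 < 0.27 ∧ 0.21 < u1 ∧ u1 < 0.22 ∧ 0.11 < u2 ∧ u2 < 0.12 ∧ 1.00 < x2 ∧ x2 < 1.01 ∧ 0.255 < x3 ∧ x3 < 0.256 ∧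
      g0 u0 u1 u2 x2 x3 = 0 ∧ g1 u0 u1 u2 x2 x3 = 0 ∧ g2 u0 u1 u2 x2 x3 = 0 ∧ g3 u0 u1 u2 x2 x3 = 0 ∧ g4 u0 u1 u2 x2 x3 = 0) ∧
    (∃ u0 u1 u2 x2 x3 : ℝ,
      0.54 < u0 ∧ u0 < 0.55 ∧ 0.28 < u1 ∧ u1 < 0.29 ∧ 1.17 < u2 ∧ u2 < 1.18 ∧ 1.02 < x2 ∧ x2 < 1.03 ∧ 0.49 < x3 ∧ x3 < 0.50 ∧
      g0 u0 u1 u2 x2 x3 = 0 ∧ g1 u0 u1 u2 x2 x3 = 0 ∧ g2 u0 u1 u2 x2 x3 = 0 ∧ g3 u0 u1 u2 x2 x3 = 0 ∧ g4 u0 u1 u2 x2 x3 = 0) ∧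
    (∃ u0 u1 u2 x2 x3 : ℝ,
      0.72 < u0 ∧ u0 < 0.73 ∧ 0.14 < u1 ∧ u1 < 0.15 ∧ 0.11 < u2 ∧ u2 < 0.12 ∧ 0.49 < x2 ∧ x2 < 0.50 ∧ 1.10 < x3 ∧ x3 < 1.11 ∧
      g0 u0 u1 u2 x2 x3 = 0 ∧ g1 u0 u1 u2 x2 x3 = 0 ∧ g2 u0 u1 u2 x2 x3 = 0 ∧ g3 u0 u1 u2 x2 x3 = 0 ∧ g4 u0 u1 u2 x2 x3 = 0) ∧
    (∃ u0 u1 u2 x2 x3 : ℝ,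
      1.36 < u0 ∧ u0 < 1.37 ∧ 1.44 < u1 ∧ u1 < 1.45 ∧ 0.15 < u2 ∧ u2 < 0.16 ∧ 0.95 < x2 ∧ x2 < 0.96 ∧ 1.38 < x3 ∧ x3 < 1.39 ∧
      g0 u0 u1 u2 x2 x3 = 0 ∧ g1 u0 u1 u2 x2 x3 = 0 ∧ g2 u0 u1 u2 x2 x3 = 0 ∧ g3 u0 u1 u2 x2 x3 = 0 ∧ g4 u0 u1 u2 x2 x3 = 0) ∧
    (∃ u0 u1 u2 x2 x3 : ℝ,
      2.49 < u0 ∧ u0 < 2.50 ∧ 0.25 < u1 ∧ u1 < 0.26 ∧ 0.17 < u2 ∧ u2 < 0.18 ∧ 1.74 < x2 ∧ x2 < 1.75 ∧ 2.47 < x3 ∧ x3 < 2.48 ∧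
      g0 u0 u1 u2 x2 x3 = 0 ∧ g1 u0 u1 u2 x2 x3 = 0 ∧ g2 u0 u1 u2 x2 x3 = 0 ∧ g3 u0 u1 u2 x2 x3 = 0 ∧ g4 u0 u1 u2 x2 x3 = 0) := by
  refine ⟨?_, ?_, ?_, ?_, ?_⟩
  · obtain ⟨u0, u1, u2, x2, x3, h0, h1, h2, h3, h4, h⟩ := F4.sol F4.c0 F4.A0 F4.B0 F4.inv0 F4.test0
    rw [abs_le] at h0 h1 h2 h3 h4
    simp [F4.c0] at h0 h1 h2 h3 h4
    norm_num at h0 h1 h2 h3 h4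
    refine ⟨u0, u1, u2, x2, x3, ?_, ?_, ?_, ?_, ?_, ?_, ?_, ?_, ?_, ?_, h⟩ <;> linarith
  · obtain ⟨u0, u1, u2, x2, x3, h0, h1, h2, h3, h4, h⟩ := F4.sol F4.c1 F4.A1 F4.B1 F4.inv1 F4.test1
    rw [abs_le] at h0 h1 h2 h3 h4
    simp [F4.c1] at h0 h1 h2 h3 h4
    norm_num at h0 h1 h2 h3 h4
    refine ⟨u0, u1, u2, x2, x3, ?_, ?_, ?_, ?_, ?_, ?_, ?_, ?_, ?_, ?_, h⟩ <;> linarith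
  · obtain ⟨u0, u1, u2, x2, x3, h0, h1, h2, h3, h4, h⟩ := F4.sol F4.c2 F4.A2 F4.B2 F4.inv2 F4.test2
    rw [abs_le] at h0 h1 h2 h3 h4
    simp [F4.c2] at h0 h1 h2 h3 h4
    norm_num at h0 h1 h2 h3 h4
    refine ⟨u0, u1, u2, x2, x3, ?_, ?_, ?_, ?_, ?_, ?_, ?_, ?_, ?_, ?_, h⟩ <;> linarith
  · obtain ⟨u0, u1, u2, x2, x3, h0, h1, h2, h3, h4, h⟩ := F4.sol F4.c3 F4.A3 F4.B3 F4.inv3 F4.test3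
    rw [abs_le] at h0 h1 h2 h3 h4
    simp [F4.c3] at h0 h1 h2 h3 h4
    norm_num at h0 h1 h2 h3 h4
    refine ⟨u0, u1, u2, x2, x3, ?_, ?_, ?_, ?_, ?_, ?_, ?_, ?_, ?_, ?_, h⟩ <;> linarith
  · obtain ⟨u0, u1, u2, x2, x3, h0, h1, h2, h3, h4, h⟩ := F4.sol F4.c4 F4.A4 F4.B4 F4.inv4 F4.test4
    rw [abs_le] at h0 h1 h2 h3 h4
    simp [F4.c4] at h0 h1 h2 h3 h4
    norm_num at h0 h1 h2 h3 h4
    refine ⟨u0, u1, u2, x2, x3, ?_, ?_, ?_, ?_, ?_, ?_, ?_, ?_, ?_, ?_, h⟩ <;> linarith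
end

section
/- For all real numbers x2 and u1 such that (x2 - 1)*(2375*x2^3 - 4195*x2^2 + 1960*x2 - 272) = 0 and 102*u1 - 2375*x2^3 + 6570*x2^2 - 5305*x2 + 1008 = 0, the quintuple (u0, u1, u2, x2, x3) with u0 = u2 = x2 and x3 = 1 satisfies g0 = g1 = g2 = g3 = g4 = 0. (These are naturally reductive Einstein solutions on F4(2) with u0 = u2 = x2 and x1 = x3; for x2 = 1 one recovers the bi-invariant metric u0 = u1 = u2 = x2 = x3 = 1.) -/
theorem stmt7 :
    ∀ x2 u1 : ℝ,
      (x2 - 1) * (2375 * x2 ^ 3 - 4195 * x2 ^ 2 + 1960 * x2 - 272) = 0 →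
      102 * u1 - 2375 * x2 ^ 3 + 6570 * x2 ^ 2 - 5305 * x2 + 1008 = 0 →
      (g0 x2 u1 x2 x2 1 = 0 ∧ g1 x2 u1 x2 x2 1 = 0 ∧ g2 x2 u1 x2 x2 1 = 0 ∧ g3 x2 u1 x2 x2 1 = 0 ∧ g4 x2 u1 x2 x2 1 = 0) := by
  intro x u h1 h2
  have hq : 3 * u * x - (-25 * x ^ 2 + 36 * x - 8) = 0 := by
    linear_combination (1 / 34) * h1 + (x / 34) * h2
  have h0 : 5 * x ^ 3 * u + 4 * x * u - 7 * u ^ 2 * x ^ 2 - 2 * x ^ 2 = 0 := by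
    linear_combination (-2 / 9) * h1 + (1 / 9) * (15 * x ^ 2 + 12
      - 7 * (3 * u * x + (-25 * x ^ 2 + 36 * x - 8))) * hq
  unfold g0 g1 g2 g3 g4
  refine ⟨?_, ?_, ?_, ?_, ?_⟩
  · linear_combination h0
  · linear_combination (-2 * x) * h0
  · linear_combination (3 * x ^ 2) * hq
  · linear_combination (-3 * x) * hq
  · linear_combination (3 * x) * hq
end
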